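/- Let S > 0, 0 < δ₁ < S, δ₂ > 0, r > 0. Let χ : [0,S] × ∂Ω → [0,∞) be continuous with χ(t,x) = δ₂ for all (t,x) ∈ [δ₁,S] × ∂Ω, and let q : (0,S) × Ω → ℝ be continuous and bounded. Let F₁ : [0,S] × cl(Ω) × ℝ → ℝ be continuous, twice continuously differentiable in the last variable, with F₁(t,x,0) = 0, ∂²_uF₁(t,x,u) ≤ 0 for u ≥ 0, ∂²_uF₁(t,x,u) ≥ 0 for u ≤ 0, and ∂_uF₁(t,x,0) ≤ q(t,x) on (0,S) × Ω. Suppose that for each λ ∈ [−r,r] there are functions v_λ, v⁽¹⁾_λ, v⁽²⁾_λ : [0,S] × cl(Ω) → ℝ such that, setting V_λ(t,x) := ∂_uF₁(t,x,v_λ(t,x)): v_λ is a classical solution of ∂_t v − Δv + F₁(t,x,v) = 0 in (0,S) × Ω with lateral boundary values λχ and zero initial values, v_0 ≡ 0; v⁽¹⁾_λ is a classical solution of ∂_t u − Δu + V_λ u = 0 with lateral boundary values χ and zero initial values; v⁽²⁾_λ is a classical solution of ∂_t u − Δu + V_λ u = −∂²_uF₁(t,x,v_λ(t,x)) (v⁽¹⁾_λ(t,x))²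 with zero lateral boundary values and zero initial values; and for each (t,x), λ ↦ v_λ(t,x) is continuous on [−r,r] and differentiable on (−r,r) with derivative v⁽¹⁾_λ(t,x), and λ ↦ v⁽¹⁾_λ(t,x) is differentiable on (−r,r) with derivative v⁽²⁾_λ(t,x). Let w be a classical solution of ∂_t w − Δw + q w = 0 in (0,S) × Ω with lateral boundary values χ and zero initial values and set a₁ := inf { w(t,x) : (t,x) ∈ [δ₁,S] × cl(Ω) }. Finally, let F₂ : [0,S] × cl(Ω) × ℝ → ℝ be continuous and continuously differentiable in the last variable with F₂(t,x,0) = 0, and assume that ∂_uF₁(t,x,v_λ(t,x)) = ∂_uF₂(t,x,v_λ(t,x)) for all λ ∈ [−r,r] and all (t,x) ∈ (δ₁,S) × Ω. Then F₁(t,x,s) = F₂(t,x,s) for all (t,x) ∈ (δ₁,S) × Ω and all s ∈ [−a₁ r, a₁ r]. -/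

import Mathlib

open Set

namespace Paper

noncomputable section

/-- Time derivative `∂ₜu`. -/
def timeDeriv {n : ℕ} (u : ℝ → (Fin n → ℝ) → ℝ) (t : ℝ) (x : Fin n → ℝ) : ℝ :=
  deriv (fun s => u s x) t

/-- Spatial partial derivative `∂ᵢu`. -/
def spatialDeriv {n : ℕ} (u : ℝ → (Fin n → ℝ) → ℝ) (i : Fin n) (t : ℝ) (x : Fin n → ℝ) : ℝ :=
  deriv (fun s => u t (Function.update x i s)) (x i)

/-- Second spatial partial derivative `∂ᵢ∂ⱼu`. -/
def spatialDeriv2 {n : ℕ} (u : ℝ → (Fin n → ℝ) → ℝ) (i j : Fin n) (t : ℝ)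
    (x : Fin n → ℝ) : ℝ :=
  spatialDeriv (spatialDeriv u j) i t x

/-- Laplacian in the space variables. -/
def laplacian {n : ℕ} (u : ℝ → (Fin n → ℝ) → ℝ) (t : ℝ) (x : Fin n → ℝ) : ℝ :=
  ∑ i, spatialDeriv2 u i i t x

/-- Parabolic regularity: `u` is continuous on `[0,S] × cl Ω`, and `∂ₜu` together with all
spatial partial derivatives of `u` up to order 2 exist and are continuous on `(0,S) × Ω`. -/
structure ParabolicRegular {n : ℕ} (Ω : Set (Fin n → ℝ)) (S : ℝ)
    (u : ℝ → (Fin n → ℝ) → ℝ) : Prop where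
  cont : ContinuousOn (fun p : ℝ × (Fin n → ℝ) => u p.1 p.2) (Icc 0 S ×ˢ closure Ω)
  diff_t : ∀ t ∈ Ioo 0 S, ∀ x ∈ Ω, DifferentiableAt ℝ (fun s => u s x) t
  diff_x : ∀ t ∈ Ioo 0 S, ∀ x ∈ Ω, ∀ i,
    DifferentiableAt ℝ (fun s => u t (Function.update x i s)) (x i)
  diff_xx : ∀ t ∈ Ioo 0 S, ∀ x ∈ Ω, ∀ i j,
    DifferentiableAt ℝ (fun s => spatialDeriv u j t (Function.update x i s)) (x i)
  cont_t : ContinuousOn (fun p : ℝ × (Fin n → ℝ) => timeDeriv u p.1 p.2) (Ioo 0 S ×ˢ Ω)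
  cont_x : ∀ i, ContinuousOn (fun p : ℝ × (Fin n → ℝ) => spatialDeriv u i p.1 p.2)
    (Ioo 0 S ×ˢ Ω)
  cont_xx : ∀ i j, ContinuousOn (fun p : ℝ × (Fin n → ℝ) => spatialDeriv2 u i j p.1 p.2)
    (Ioo 0 S ×ˢ Ω)

/-- Classical solution of `∂ₜu − Δu + c u = f` in `(0,S) × Ω` with lateral boundary values `g`
and zero initial values. -/
structure IsClassicalSolution {n : ℕ} (Ω : Set (Fin n → ℝ)) (S : ℝ)
    (c f g u : ℝ → (Fin n → ℝ) → ℝ) extends ParabolicRegular Ω S u : Prop where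
  eqn : ∀ t ∈ Ioo 0 S, ∀ x ∈ Ω, timeDeriv u t x - laplacian u t x + c t x * u t x = f t x
  lateral : ∀ t ∈ Icc 0 S, ∀ x ∈ frontier Ω, u t x = g t x
  initial : ∀ x ∈ closure Ω, u 0 x = 0

/-- `∂_u F` for a semilinear term `F(t,x,u)`. -/
def uDeriv {n : ℕ} (F : ℝ → (Fin n → ℝ) → ℝ → ℝ) (t : ℝ) (x : Fin n → ℝ) (u : ℝ) : ℝ :=
  deriv (F t x) u

/-- `∂_u² F`. -/
def uDeriv2 {n : ℕ} (F : ℝ → (Fin n → ℝ) → ℝ → ℝ) : ℝ → (Fin n → ℝ) → ℝ → ℝ :=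
  uDeriv (uDeriv F)

/-- `∂_u³ F`. -/
def uDeriv3 {n : ℕ} (F : ℝ → (Fin n → ℝ) → ℝ → ℝ) : ℝ → (Fin n → ℝ) → ℝ → ℝ :=
  uDeriv (uDeriv2 F)

/-- `∂_u⁴ F`. -/
def uDeriv4 {n : ℕ} (F : ℝ → (Fin n → ℝ) → ℝ → ℝ) : ℝ → (Fin n → ℝ) → ℝ → ℝ :=
  uDeriv (uDeriv3 F)

/-- `∂ₜF` for `F` depending on `(t,x,u)`. -/
def FtDeriv {n : ℕ} (F : ℝ → (Fin n → ℝ) → ℝ → ℝ) (t : ℝ) (x : Fin n → ℝ) (u : ℝ) : ℝ :=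
  deriv (fun s => F s x u) t

/-- `∂_{xᵢ}F` for `F` depending on `(t,x,u)`. -/
def FxDeriv {n : ℕ} (F : ℝ → (Fin n → ℝ) → ℝ → ℝ) (i : Fin n) (t : ℝ) (x : Fin n → ℝ)
    (u : ℝ) : ℝ :=
  deriv (fun s => F t (Function.update x i s) u) (x i)

/-- `F` is continuous on `[0,S] × cl Ω × ℝ` and continuously differentiable in the last
variable. -/
def C1InU {n : ℕ} (Ω : Set (Fin n → ℝ)) (S : ℝ) (F : ℝ → (Fin n → ℝ) → ℝ → ℝ) : Prop :=
  ContinuousOn (fun p : ℝ × (Fin n → ℝ) × ℝ => F p.1 p.2.1 p.2.2)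
    (Icc 0 S ×ˢ closure Ω ×ˢ (univ : Set ℝ)) ∧
  (∀ t ∈ Icc 0 S, ∀ x ∈ closure Ω, ∀ u : ℝ, DifferentiableAt ℝ (F t x) u) ∧
  ContinuousOn (fun p : ℝ × (Fin n → ℝ) × ℝ => uDeriv F p.1 p.2.1 p.2.2)
    (Icc 0 S ×ˢ closure Ω ×ˢ (univ : Set ℝ))

/-- `F` is continuous and twice continuously differentiable in the last variable. -/
def C2InU {n : ℕ} (Ω : Set (Fin n → ℝ)) (S : ℝ) (F : ℝ → (Fin n → ℝ) → ℝ → ℝ) : Prop :=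
  C1InU Ω S F ∧
  (∀ t ∈ Icc 0 S, ∀ x ∈ closure Ω, ∀ u : ℝ, DifferentiableAt ℝ (uDeriv F t x) u) ∧
  ContinuousOn (fun p : ℝ × (Fin n → ℝ) × ℝ => uDeriv2 F p.1 p.2.1 p.2.2)
    (Icc 0 S ×ˢ closure Ω ×ˢ (univ : Set ℝ))

/-- `‖f‖_{W^{1,∞}} ≤ B` on `[0,S] × cl Ω`, stated componentwise: `f`, `∂ₜf` and all `∂ᵢf`
are bounded by `B` in absolute value. -/
def W1infLE {n : ℕ} (Ω : Set (Fin n → ℝ)) (S : ℝ) (f : ℝ → (Fin n → ℝ) → ℝ) (B : ℝ) : Prop :=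
  ∀ t ∈ Icc 0 S, ∀ x ∈ closure Ω,
    |f t x| ≤ B ∧ |timeDeriv f t x| ≤ B ∧ ∀ i, |spatialDeriv f i t x| ≤ B

/-- `f` has bounded continuous first-order derivatives on `[0,S] × cl Ω`. -/
def C1Bounded {n : ℕ} (Ω : Set (Fin n → ℝ)) (S : ℝ) (f : ℝ → (Fin n → ℝ) → ℝ) : Prop :=
  (∀ t ∈ Icc 0 S, ∀ x ∈ closure Ω, DifferentiableAt ℝ (fun s => f s x) t ∧
    ∀ i, DifferentiableAt ℝ (fun s => f t (Function.update x i s)) (x i)) ∧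
  ContinuousOn (fun p : ℝ × (Fin n → ℝ) => f p.1 p.2) (Icc 0 S ×ˢ closure Ω) ∧
  ContinuousOn (fun p : ℝ × (Fin n → ℝ) => timeDeriv f p.1 p.2) (Icc 0 S ×ˢ closure Ω) ∧
  (∀ i, ContinuousOn (fun p : ℝ × (Fin n → ℝ) => spatialDeriv f i p.1 p.2)
    (Icc 0 S ×ˢ closure Ω)) ∧
  ∃ B, W1infLE Ω S f B

/-- Componentwise bound `‖f‖_* ≤ ε` for the parabolic Schauder norm of
`C([0,S];C^{2+α}(cl Ω)) ∩ C^{1+α/2}([0,S];C(cl Ω))`: sup bounds on `f`, `∂ₜf`, spatial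
derivatives up to order 2, the `α`-Hölder (in `x`) seminorms of the second spatial derivatives,
and the `α/2`-Hölder (in `t`) seminorm of `∂ₜf`. -/
def SchauderLE {n : ℕ} (α : ℝ) (Ω : Set (Fin n → ℝ)) (S : ℝ) (f : ℝ → (Fin n → ℝ) → ℝ)
    (ε : ℝ) : Prop :=
  (∀ t ∈ Icc 0 S, ∀ x ∈ closure Ω,
    |f t x| ≤ ε ∧ |timeDeriv f t x| ≤ ε ∧ (∀ i, |spatialDeriv f i t x| ≤ ε) ∧
    ∀ i j, |spatialDeriv2 f i j t x| ≤ ε) ∧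
  (∀ t ∈ Icc 0 S, ∀ x ∈ closure Ω, ∀ x' ∈ closure Ω, ∀ i j,
    |spatialDeriv2 f i j t x - spatialDeriv2 f i j t x'| ≤ ε * dist x x' ^ α) ∧
  (∀ x ∈ closure Ω, ∀ t ∈ Icc 0 S, ∀ t' ∈ Icc 0 S,
    |timeDeriv f t x - timeDeriv f t' x| ≤ ε * |t - t'| ^ (α / 2))

/-- `G`, `∂ₜG` and the `∂_{xᵢ}G` exist and are continuous on `[0,S] × cl Ω × ℝ`. -/
def C1InTX {n : ℕ} (Ω : Set (Fin n → ℝ)) (S : ℝ) (G : ℝ → (Fin n → ℝ) → ℝ → ℝ) : Prop :=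
  (∀ t ∈ Icc 0 S, ∀ x ∈ closure Ω, ∀ u : ℝ,
    DifferentiableAt ℝ (fun s => G s x u) t ∧
    ∀ i, DifferentiableAt ℝ (fun s => G t (Function.update x i s) u) (x i)) ∧
  ContinuousOn (fun p : ℝ × (Fin n → ℝ) × ℝ => G p.1 p.2.1 p.2.2)
    (Icc 0 S ×ˢ closure Ω ×ˢ (univ : Set ℝ)) ∧
  ContinuousOn (fun p : ℝ × (Fin n → ℝ) × ℝ => FtDeriv G p.1 p.2.1 p.2.2)
    (Icc 0 S ×ˢ closure Ω ×ˢ (univ : Set ℝ)) ∧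
  ∀ i, ContinuousOn (fun p : ℝ × (Fin n → ℝ) × ℝ => FxDeriv G i p.1 p.2.1 p.2.2)
    (Icc 0 S ×ˢ closure Ω ×ˢ (univ : Set ℝ))

/-- `G`, `∂ₜG` and the `∂_{xᵢ}G` are bounded by `κ(|u|)` on `[0,S] × cl Ω`, for every `u`. -/
def BoundedByKappa {n : ℕ} (Ω : Set (Fin n → ℝ)) (S : ℝ) (G : ℝ → (Fin n → ℝ) → ℝ → ℝ)
    (κ : ℝ → ℝ) : Prop :=
  ∀ u : ℝ, ∀ t ∈ Icc 0 S, ∀ x ∈ closure Ω,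
    |G t x u| ≤ κ |u| ∧ |FtDeriv G t x u| ≤ κ |u| ∧ ∀ i, |FxDeriv G i t x u| ≤ κ |u|

/-- The family of solutions of the semilinear problem with boundary data `λχ`, together with
its first and second linearizations in the boundary parameter `λ`. -/
structure SemilinearFamily {n : ℕ} (Ω : Set (Fin n → ℝ)) (S r : ℝ)
    (χ : ℝ → (Fin n → ℝ) → ℝ) (F : ℝ → (Fin n → ℝ) → ℝ → ℝ)
    (v v1 v2 : ℝ → ℝ → (Fin n → ℝ) → ℝ) : Prop where
  sol : ∀ lam ∈ Icc (-r) r, IsClassicalSolution Ω S (fun _ _ => (0 : ℝ))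
      (fun t x => -F t x (v lam t x)) (fun t x => lam * χ t x) (v lam)
  zero : ∀ t ∈ Icc 0 S, ∀ x ∈ closure Ω, v 0 t x = 0
  lin1 : ∀ lam ∈ Icc (-r) r, IsClassicalSolution Ω S
      (fun t x => uDeriv F t x (v lam t x)) (fun _ _ => (0 : ℝ)) χ (v1 lam)
  lin2 : ∀ lam ∈ Icc (-r) r, IsClassicalSolution Ω S
      (fun t x => uDeriv F t x (v lam t x))
      (fun t x => -uDeriv2 F t x (v lam t x) * (v1 lam t x) ^ 2) (fun _ _ => (0 : ℝ)) (v2 lam)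
  cont_lam : ∀ t ∈ Icc 0 S, ∀ x ∈ closure Ω, ContinuousOn (fun lam => v lam t x) (Icc (-r) r)
  deriv1 : ∀ t ∈ Icc 0 S, ∀ x ∈ closure Ω, ∀ lam ∈ Ioo (-r) r,
      HasDerivAt (fun μ => v μ t x) (v1 lam t x) lam
  deriv2 : ∀ t ∈ Icc 0 S, ∀ x ∈ closure Ω, ∀ lam ∈ Ioo (-r) r,
      HasDerivAt (fun μ => v1 μ t x) (v2 lam t x) lam

end

end Paper

namespace Paper

lemma second_deriv_nonneg {g : ℝ → ℝ} {a : ℝ} (hmin : IsLocalMin g a)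
    (hc : ContinuousAt g a) : 0 ≤ deriv (deriv g) a := by
  by_contra hneg
  push Not at hneg
  have hd : deriv g a = 0 := hmin.deriv_eq_zero
  have hmax : IsLocalMax g a := isLocalMax_of_deriv_deriv_neg hneg hd hc
  have heq : g =ᶠ[nhds a] fun _ => g a := by
    filter_upwards [hmin, hmax] with y h1 h2
    exact le_antisymm h2 h1
  have h2 : deriv (deriv g) a = 0 := by
    rw [heq.deriv.deriv_eq]
    simp
  linarith

lemma line_eventually {n : ℕ} {Ω : Set (Fin n → ℝ)} (hΩ : IsOpen Ω) {x : Fin n → ℝ} (hx : x ∈ Ω)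
    (i : Fin n) : ∀ᶠ s in nhds (x i), Function.update x i s ∈ Ω := by
  have hc : Continuous (fun s : ℝ => Function.update x i s) :=
    continuous_const.update i continuous_id
  apply hc.continuousAt.eventually
  apply hΩ.mem_nhds
  simpa using hx

lemma spatialDeriv_line {n : ℕ} (u : ℝ → (Fin n → ℝ) → ℝ) (i : Fin n) (t : ℝ) (x : Fin n → ℝ)
    (s : ℝ) : spatialDeriv u i t (Function.update x i s)
      = deriv (fun s => u t (Function.update x i s)) s := by
  simp [spatialDeriv]

lemma line_min {n : ℕ} {Ω : Set (Fin n → ℝ)} (hΩ : IsOpen Ω) {S : ℝ}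
    {u₁ u₂ : ℝ → (Fin n → ℝ) → ℝ} (h₁ : ParabolicRegular Ω S u₁) (h₂ : ParabolicRegular Ω S u₂)
    {t : ℝ} (ht : t ∈ Ioo 0 S) {x : Fin n → ℝ} (hx : x ∈ Ω)
    (hmin : ∀ y ∈ Ω, u₁ t x - u₂ t x ≤ u₁ t y - u₂ t y) (i : Fin n) :
    0 ≤ spatialDeriv2 u₁ i i t x - spatialDeriv2 u₂ i i t x := by
  have ev := line_eventually hΩ hx i
  have key : ∀ {u : ℝ → (Fin n → ℝ) → ℝ}, ParabolicRegular Ω S u →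
      ∀ s, Function.update x i s ∈ Ω →
        DifferentiableAt ℝ (fun s => u t (Function.update x i s)) s := by
    intro u hu s hs
    have := hu.diff_x t ht _ hs i
    simpa using this
  have hd2 : ∀ (u : ℝ → (Fin n → ℝ) → ℝ),
      spatialDeriv2 u i i t x = deriv (deriv (fun s => u t (Function.update x i s))) (x i) := by
    intro u
    unfold spatialDeriv2
    rw [spatialDeriv]
    congr 1
    funext s
    exact spatialDeriv_line u i t x s
  have hdd : ∀ {u : ℝ → (Fin n → ℝ) → ℝ}, ParabolicRegular Ω S u →
      DifferentiableAt ℝ (deriv (fun s => u t (Function.update x i s))) (x i) := by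
    intro u hu
    have := hu.diff_xx t ht x hx i i
    have e : (fun s => spatialDeriv u i t (Function.update x i s))
      = deriv (fun s => u t (Function.update x i s)) := by
      funext s
      exact spatialDeriv_line u i t x s
    rwa [e] at this
  have hder : deriv (fun s => u₁ t (Function.update x i s) - u₂ t (Function.update x i s))
      =ᶠ[nhds (x i)] fun s => deriv (fun s => u₁ t (Function.update x i s)) s
        - deriv (fun s => u₂ t (Function.update x i s)) s := by
    filter_upwards [ev] with s hs
    exact deriv_fun_sub (key h₁ s hs) (key h₂ s hs)
  have hloc : IsLocalMin
      (fun s => u₁ t (Function.update x i s) - u₂ t (Function.update x i s)) (x i) := by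
    filter_upwards [ev] with s hs
    simpa using hmin _ hs
  have hx0 : Function.update x i (x i) ∈ Ω := by simpa using hx
  have hfin := second_deriv_nonneg hloc
    ((key h₁ _ hx0).sub (key h₂ _ hx0)).continuousAt
  rw [hder.deriv_eq, deriv_fun_sub (hdd h₁) (hdd h₂)] at hfin
  rw [hd2, hd2]
  exact hfin

lemma maxPrinciple {n : ℕ} {Ω : Set (Fin n → ℝ)} (hΩ : IsOpen Ω) (hb : Bornology.IsBounded Ω)
    {S : ℝ} (hS : 0 < S)
    {u₁ u₂ : ℝ → (Fin n → ℝ) → ℝ} (h₁ : ParabolicRegular Ω S u₁) (h₂ : ParabolicRegular Ω S u₂)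
    (M : ℝ)
    (heq : ∀ t ∈ Ioo 0 S, ∀ x ∈ Ω, u₁ t x - u₂ t x < 0 →
      M * (u₁ t x - u₂ t x) ≤
        (timeDeriv u₁ t x - laplacian u₁ t x) - (timeDeriv u₂ t x - laplacian u₂ t x))
    (hlat : ∀ t ∈ Icc 0 S, ∀ x ∈ frontier Ω, u₂ t x ≤ u₁ t x)
    (hini : ∀ x ∈ closure Ω, u₂ 0 x ≤ u₁ 0 x) :
    ∀ t ∈ Icc 0 S, ∀ x ∈ closure Ω, u₂ t x ≤ u₁ t x := by
  have main : ∀ t ∈ Ico 0 S, ∀ x ∈ closure Ω, 0 ≤ u₁ t x - u₂ t x := by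
    intro T hT x₀ hx₀
    by_contra hneg
    push Not at hneg
    set K := M + 1 with hK
    have hsub : Icc 0 T ×ˢ closure Ω ⊆ Icc 0 S ×ˢ closure Ω :=
      prod_mono (Icc_subset_Icc_right hT.2.le) subset_rfl
    have hcpt : IsCompact (Icc 0 T ×ˢ closure Ω) := isCompact_Icc.prod hb.isCompact_closure
    have hcont : ContinuousOn
        (fun p : ℝ × (Fin n → ℝ) => Real.exp (-K * p.1) * (u₁ p.1 p.2 - u₂ p.1 p.2))
        (Icc 0 T ×ˢ closure Ω) := by
      apply ContinuousOn.mul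
      · fun_prop
      · exact (h₁.cont.mono hsub).sub (h₂.cont.mono hsub)
    obtain ⟨⟨t, x⟩, ⟨ht, hx⟩, hmin⟩ := hcpt.exists_isMinOn
      ⟨(T, x₀), ⟨⟨hT.1, le_rfl⟩, hx₀⟩⟩ hcont
    simp only at ht hx
    have hle : ∀ s ∈ Icc 0 T, ∀ y ∈ closure Ω,
        Real.exp (-K * t) * (u₁ t x - u₂ t x) ≤ Real.exp (-K * s) * (u₁ s y - u₂ s y) :=
      fun s hs y hy => hmin (show ((s, y) : ℝ × (Fin n → ℝ)) ∈ _ from ⟨hs, hy⟩)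
    have hdneg : u₁ t x - u₂ t x < 0 := by
      have h1 := hle T ⟨hT.1, le_rfl⟩ x₀ hx₀
      have h2 := mul_neg_of_pos_of_neg (Real.exp_pos (-K * T)) hneg
      by_contra hh
      push Not at hh
      have := mul_nonneg (Real.exp_pos (-K * t)).le hh
      linarith
    have htS : t ∈ Icc 0 S := ⟨ht.1, ht.2.trans hT.2.le⟩
    have ht0 : 0 < t := by
      rcases ht.1.eq_or_lt with h | h
      · have := hini x hx
        rw [← h] at hdneg
        linarith
      · exact h
    have hxΩ : x ∈ Ω := by
      by_contra hh
      have : x ∈ frontier Ω := by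
        rw [frontier, hΩ.interior_eq]
        exact ⟨hx, hh⟩
      have := hlat t htS x this
      linarith
    have htI : t ∈ Ioo 0 S := ⟨ht0, ht.2.trans_lt hT.2⟩
    have hlap : 0 ≤ laplacian u₁ t x - laplacian u₂ t x := by
      unfold laplacian
      rw [← Finset.sum_sub_distrib]
      apply Finset.sum_nonneg
      intro i _
      apply line_min hΩ h₁ h₂ htI hxΩ
      intro y hy
      exact le_of_mul_le_mul_left (hle t ht y (subset_closure hy)) (Real.exp_pos _)
    have hdt : timeDeriv u₁ t x - timeDeriv u₂ t x ≤ K * (u₁ t x - u₂ t x) := by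
      have e1 := (h₁.diff_t t htI x hxΩ).hasDerivAt
      have e2 := (h₂.diff_t t htI x hxΩ).hasDerivAt
      have e3 : HasDerivAt (fun s => Real.exp (-K * s)) (Real.exp (-K * t) * (-K)) t := by
        have := ((hasDerivAt_id t).const_mul (-K)).exp
        simpa using this
      have e4 := e3.mul (e1.sub e2)
      have hle0 : Real.exp (-K * t) * (-K) * (u₁ t x - u₂ t x)
          + Real.exp (-K * t) * (timeDeriv u₁ t x - timeDeriv u₂ t x) ≤ 0 := by
        have e5 := (hasDerivWithinAt_iff_tendsto_slope' (s := Iio t) (by simp)).1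
          e4.hasDerivWithinAt
        refine le_of_tendsto e5 ?_
        have : Ioo 0 t ∈ nhdsWithin t (Iio t) := Ioo_mem_nhdsLT ht0
        filter_upwards [this] with s hs
        have := hle s ⟨hs.1.le, hs.2.le.trans ht.2⟩ x hx
        rw [slope_def_field]
        apply div_nonpos_of_nonneg_of_nonpos
        · simpa using this
        · linarith [hs.2]
      have hpos := Real.exp_pos (-K * t)
      have : Real.exp (-K * t) * ((timeDeriv u₁ t x - timeDeriv u₂ t x)
        - K * (u₁ t x - u₂ t x)) ≤ 0 := by linarith
      have := nonpos_of_mul_nonpos_right this hpos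
      linarith
    have := heq t htI x hxΩ hdneg
    rw [hK] at hdt
    linarith
  intro t ht x hx
  have hc : ContinuousOn (fun s => u₁ s x - u₂ s x) (Icc 0 S) := by
    have hm : MapsTo (fun s : ℝ => (s, x)) (Icc 0 S) (Icc 0 S ×ˢ closure Ω) :=
      fun s hs => ⟨hs, hx⟩
    have hp : ContinuousOn (fun s : ℝ => (s, x)) (Icc 0 S) := by fun_prop
    exact (h₁.cont.comp hp hm).sub (h₂.cont.comp hp hm)
  have hcl : closure (Ico 0 S) = Icc 0 S := closure_Ico hS.ne
  have : 0 ≤ u₁ t x - u₂ t x := by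
    have hmt : MapsTo (fun s => u₁ s x - u₂ s x) (closure (Ico 0 S)) (closure (Ici 0)) :=
      MapsTo.closure_of_continuousOn (fun s hs => main s hs x hx) (by rwa [hcl])
    rw [hcl, closure_Ici] at hmt
    exact hmt ht
  linarith

lemma parabolicRegular_zero {n : ℕ} (Ω : Set (Fin n → ℝ)) (S : ℝ) :
    ParabolicRegular Ω S (fun _ _ => (0 : ℝ)) := by
  constructor <;> intros <;> (try simp only [timeDeriv, spatialDeriv, spatialDeriv2, deriv_const])
  all_goals first
    | exact continuousOn_const
    | exact differentiableAt_const _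

lemma deriv_le_at_zero {f : ℝ → ℝ} (hd : ∀ u, DifferentiableAt ℝ f u)
    (h1 : ∀ u, 0 ≤ u → deriv f u ≤ 0) (h2 : ∀ u, u ≤ 0 → 0 ≤ deriv f u) (u : ℝ) :
    f u ≤ f 0 := by
  have hcont : Continuous f := continuous_iff_continuousAt.2 fun u => (hd u).continuousAt
  rcases le_total 0 u with h | h
  · refine antitoneOn_of_deriv_nonpos (convex_Ici 0) hcont.continuousOn
      (fun x _ => (hd x).differentiableWithinAt) (fun x hx => ?_)
      (show (0:ℝ) ∈ Ici 0 by simp) h h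
    rw [interior_Ici] at hx
    exact h1 x (le_of_lt hx)
  · refine monotoneOn_of_deriv_nonneg (convex_Iic 0) hcont.continuousOn
      (fun x _ => (hd x).differentiableWithinAt) (fun x hx => ?_)
      h (show (0:ℝ) ∈ Iic 0 by simp) h
    rw [interior_Iic] at hx
    exact h2 x (le_of_lt hx)

lemma eq_of_deriv_eq {f g : ℝ → ℝ} (hf : ∀ u, DifferentiableAt ℝ f u)
    (hg : ∀ u, DifferentiableAt ℝ g u) (h0 : f 0 = g 0) {A : ℝ}
    (h : ∀ u ∈ Icc (-A) A, deriv f u = deriv g u) : ∀ s ∈ Icc (-A) A, f s = g s := by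
  intro s hs
  have hA : (0:ℝ) ∈ Icc (-A) A := by
    have := hs.1.trans hs.2
    constructor <;> linarith
  have hd : ∀ u, HasDerivAt (fun u => f u - g u) (deriv f u - deriv g u) u :=
    fun u => (hf u).hasDerivAt.fun_sub (hg u).hasDerivAt
  have hb := (convex_Icc (-A) A).norm_image_sub_le_of_norm_hasDerivWithin_le (C := 0)
    (fun u _ => (hd u).hasDerivWithinAt) (fun u hu => by rw [h u hu]; simp) hA hs
  rw [zero_mul, norm_le_zero_iff] at hb
  linarith

end Paper

open Paper Set
/-- uniqueness conclusion of Theorem 1: if moreover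
`∂_uF₁(t,x,v_λ(t,x)) = ∂_uF₂(t,x,v_λ(t,x))` for all `λ ∈ [−r,r]` and `(t,x) ∈ (δ₁,S) × Ω`
(the consequence of the equality of the DN maps obtained by the first linearization), then
`F₁ = F₂` on `(δ₁,S) × Ω × [−a₁r, a₁r]`. -/
theorem statement7 {n : ℕ} (hn : 2 ≤ n) (Ω : Set (Fin n → ℝ)) (hΩo : IsOpen Ω)
    (hΩb : Bornology.IsBounded Ω) (hΩc : IsConnected Ω)
    (S δ₁ δ₂ r : ℝ) (hS : 0 < S) (hδ₁ : 0 < δ₁) (hδ₁S : δ₁ < S) (hδ₂ : 0 < δ₂) (hr : 0 < r)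
    (χ : ℝ → (Fin n → ℝ) → ℝ)
    (hχc : ContinuousOn (fun p : ℝ × (Fin n → ℝ) => χ p.1 p.2) (Icc 0 S ×ˢ frontier Ω))
    (hχ0 : ∀ t ∈ Icc 0 S, ∀ x ∈ frontier Ω, 0 ≤ χ t x)
    (hχδ : ∀ t ∈ Icc δ₁ S, ∀ x ∈ frontier Ω, χ t x = δ₂)
    (q : ℝ → (Fin n → ℝ) → ℝ)
    (hqc : ContinuousOn (fun p : ℝ × (Fin n → ℝ) => q p.1 p.2) (Ioo 0 S ×ˢ Ω))
    (hqb : ∃ C, ∀ t ∈ Ioo 0 S, ∀ x ∈ Ω, |q t x| ≤ C)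
    (F₁ : ℝ → (Fin n → ℝ) → ℝ → ℝ) (hF₁ : C2InU Ω S F₁)
    (hF₁0 : ∀ t ∈ Icc 0 S, ∀ x ∈ closure Ω, F₁ t x 0 = 0)
    (hF₁conc : ∀ t ∈ Icc 0 S, ∀ x ∈ closure Ω,
      (∀ u : ℝ, 0 ≤ u → uDeriv2 F₁ t x u ≤ 0) ∧ (∀ u : ℝ, u ≤ 0 → 0 ≤ uDeriv2 F₁ t x u))
    (hF₁q : ∀ t ∈ Ioo 0 S, ∀ x ∈ Ω, uDeriv F₁ t x 0 ≤ q t x)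
    (v v1 v2 : ℝ → ℝ → (Fin n → ℝ) → ℝ)
    (hfam : SemilinearFamily Ω S r χ F₁ v v1 v2)
    (w : ℝ → (Fin n → ℝ) → ℝ)
    (hw : IsClassicalSolution Ω S q (fun _ _ => (0 : ℝ)) χ w)
    (F₂ : ℝ → (Fin n → ℝ) → ℝ → ℝ) (hF₂ : C1InU Ω S F₂)
    (hF₂0 : ∀ t ∈ Icc 0 S, ∀ x ∈ closure Ω, F₂ t x 0 = 0)
    (hDN : ∀ lam ∈ Icc (-r) r, ∀ t ∈ Ioo δ₁ S, ∀ x ∈ Ω,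
      uDeriv F₁ t x (v lam t x) = uDeriv F₂ t x (v lam t x)) :
    ∀ t ∈ Ioo δ₁ S, ∀ x ∈ Ω,
      ∀ s ∈ Icc (-(sInf ((fun p : ℝ × (Fin n → ℝ) => w p.1 p.2) ''
            (Icc δ₁ S ×ˢ closure Ω)) * r))
          (sInf ((fun p : ℝ × (Fin n → ℝ) => w p.1 p.2) '' (Icc δ₁ S ×ˢ closure Ω)) * r),
        F₁ t x s = F₂ t x s := by
  obtain ⟨⟨hF₁c, hF₁d, hF₁dc⟩, hF₁dd, -⟩ := hF₁
  obtain ⟨-, hF₂d, -⟩ := hF₂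
  obtain ⟨C, hC⟩ := hqb
  have hw0 : ∀ t ∈ Icc 0 S, ∀ x ∈ closure Ω, 0 ≤ w t x := by
    refine maxPrinciple hΩo hΩb hS hw.toParabolicRegular (parabolicRegular_zero Ω S) C
      ?_ ?_ ?_
    · intro t ht x hx hneg
      have e := hw.eqn t ht x hx
      have z : timeDeriv (fun _ _ => (0:ℝ)) t x - laplacian (fun _ _ => (0:ℝ)) t x = 0 := by
        simp [timeDeriv, laplacian, spatialDeriv2, spatialDeriv]
      rw [z]
      have := neg_le_of_abs_le (hC t ht x hx)
      nlinarith
    · intro t ht x hx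
      rw [hw.lateral t ht x hx]
      exact hχ0 t ht x hx
    · intro x hx
      exact (hw.initial x hx).ge
  have hVq : ∀ t ∈ Ioo 0 S, ∀ x ∈ Ω, ∀ u, uDeriv F₁ t x u ≤ q t x := by
    intro t ht x hx u
    have ht' := Ioo_subset_Icc_self ht
    have hx' := subset_closure hx
    exact (deriv_le_at_zero (hF₁dd t ht' x hx') (hF₁conc t ht' x hx').1
      (hF₁conc t ht' x hx').2 u).trans (hF₁q t ht x hx)
  have hv1 : ∀ lam ∈ Icc (-r) r, ∀ t ∈ Icc 0 S, ∀ x ∈ closure Ω, w t x ≤ v1 lam t x := by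
    intro lam hlam
    have hs1 := hfam.lin1 lam hlam
    have hcV : ContinuousOn (fun p : ℝ × (Fin n → ℝ) => uDeriv F₁ p.1 p.2 (v lam p.1 p.2))
        (Icc 0 S ×ˢ closure Ω) := by
      have hm : MapsTo (fun p : ℝ × (Fin n → ℝ) => (p.1, p.2, v lam p.1 p.2))
          (Icc 0 S ×ˢ closure Ω) (Icc 0 S ×ˢ closure Ω ×ˢ (univ : Set ℝ)) :=
        fun p hp => ⟨hp.1, hp.2, mem_univ _⟩
      have hp : ContinuousOn (fun p : ℝ × (Fin n → ℝ) => (p.1, p.2, v lam p.1 p.2))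
          (Icc 0 S ×ˢ closure Ω) :=
        continuousOn_fst.prodMk (continuousOn_snd.prodMk (hfam.sol lam hlam).cont)
      exact hF₁dc.comp hp hm
    obtain ⟨M, hM⟩ := (isCompact_Icc.prod hΩb.isCompact_closure).exists_bound_of_continuousOn hcV
    refine maxPrinciple hΩo hΩb hS hs1.toParabolicRegular hw.toParabolicRegular M ?_ ?_ ?_
    · intro t ht x hx hneg
      have e1 := hs1.eqn t ht x hx
      have e2 := hw.eqn t ht x hx
      have hb := neg_le_of_abs_le (hM (t, x) ⟨Ioo_subset_Icc_self ht, subset_closure hx⟩)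
      simp only at hb e1 e2
      have hq := hVq t ht x hx (v lam t x)
      have hwn := hw0 t (Ioo_subset_Icc_self ht) x (subset_closure hx)
      have p1 := mul_nonneg (sub_nonneg.2 hq) hwn
      have p2 : 0 ≤ (uDeriv F₁ t x (v lam t x) + M) * (w t x - v1 lam t x) :=
        mul_nonneg (by linarith) (by linarith)
      linarith
    · intro t ht x hx
      rw [hw.lateral t ht x hx, hs1.lateral t ht x hx]
    · intro x hx
      rw [hw.initial x hx, hs1.initial x hx]
  intro t ht x hx
  set a := sInf ((fun p : ℝ × (Fin n → ℝ) => w p.1 p.2) '' (Icc δ₁ S ×ˢ closure Ω)) with ha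
  have ht0 : t ∈ Icc 0 S := ⟨hδ₁.le.trans ht.1.le, ht.2.le⟩
  have hxc := subset_closure hx
  have haw : a ≤ w t x := by
    apply csInf_le
    · refine ⟨0, ?_⟩
      rintro _ ⟨p, hp, rfl⟩
      exact hw0 p.1 ⟨hδ₁.le.trans hp.1.1, hp.1.2⟩ p.2 hp.2
    · exact ⟨(t, x), ⟨⟨ht.1.le, ht.2.le⟩, hxc⟩, rfl⟩
  have hmono : MonotoneOn (fun l => v l t x - a * l) (Icc (-r) r) := by
    have hd : ∀ l ∈ Ioo (-r) r, HasDerivAt (fun l => v l t x - a * l) (v1 l t x - a) l := by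
      intro l hl
      have := (hfam.deriv1 t ht0 x hxc l hl).fun_sub ((hasDerivAt_id l).const_mul a)
      simpa using this
    refine monotoneOn_of_deriv_nonneg (convex_Icc _ _)
      ((hfam.cont_lam t ht0 x hxc).sub (by fun_prop)) ?_ ?_
    · rw [interior_Icc]
      exact fun l hl => (hd l hl).differentiableAt.differentiableWithinAt
    · rw [interior_Icc]
      intro l hl
      rw [(hd l hl).deriv]
      have := hv1 l (Ioo_subset_Icc_self hl) t ht0 x hxc
      linarith
  have hz := hfam.zero t ht0 x hxc
  have m0 : (0:ℝ) ∈ Icc (-r) r := ⟨by linarith, hr.le⟩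
  have mr : r ∈ Icc (-r) r := ⟨by linarith, le_rfl⟩
  have mnr : -r ∈ Icc (-r) r := ⟨le_rfl, by linarith⟩
  have hup := hmono m0 mr hr.le
  have hdn := hmono mnr m0 (by linarith)
  simp only [hz] at hup hdn
  refine eq_of_deriv_eq (hF₁d t ht0 x hxc) (hF₂d t ht0 x hxc)
    ((hF₁0 t ht0 x hxc).trans (hF₂0 t ht0 x hxc).symm) ?_
  intro u hu
  obtain ⟨l, hl, hlu⟩ := intermediate_value_Icc (show -r ≤ r by linarith)
    (hfam.cont_lam t ht0 x hxc) (show u ∈ Icc (v (-r) t x) (v r t x) from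
      ⟨by linarith [hu.1], by linarith [hu.2]⟩)
  have := hDN l hl t ht x hx
  simp only at hlu
  rw [hlu] at this
  exact this
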